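/- Two s-graphons ν₁ and ν₂ satisfy C(ν₁,k) = C(ν₂,k) for every k ∈ ℕ if and only if their shapes coincide, i.e. C(ν₁) = C(ν₂). -/

import Mathlib

open MeasureTheory Topology Filter

noncomputable section

/-- The unit square `[0,1]²`. -/
abbrev Sq : Type := unitInterval × unitInterval

/-- Convergence of a sequence of subsets in the Vietoris topology
(upper + lower Vietoris convergence). -/
def VietorisTendsto {X : Type*} [TopologicalSpace X] (A : ℕ → Set X) (B : Set X) : Prop :=
  (∀ U : Set X, IsOpen U → B ⊆ U → ∀ᶠ n in atTop, A n ⊆ U) ∧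
  (∀ U : Set X, IsOpen U → (B ∩ U).Nonempty → ∀ᶠ n in atTop, (A n ∩ U).Nonempty)

/-- A measure on the unit square is symmetric if it is invariant under the coordinate swap. -/
def IsSymmSq (μ : Measure Sq) : Prop := μ.map Prod.swap = μ

/-- s-graphons: symmetric Borel probability measures on the unit square,
with the weak topology. -/
def SGraphon : Type := {μ : ProbabilityMeasure Sq // IsSymmSq (μ : Measure Sq)}

instance : TopologicalSpace SGraphon :=
  inferInstanceAs (TopologicalSpace {μ : ProbabilityMeasure Sq // IsSymmSq (μ : Measure Sq)})

/-- The underlying measure of an s-graphon. -/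
def SGraphon.toMeasure (μ : SGraphon) : Measure Sq := (μ.1 : Measure Sq)

/-- A non-negative bounded Borel function on the unit square is fairly distributed
if all its horizontal and vertical sections integrate (w.r.t. Lebesgue measure) to 1. -/
structure FairlyDistributed (f : Sq → ℝ) : Prop where
  measurable : Measurable f
  nonneg : ∀ p, 0 ≤ f p
  bounded : ∃ C : ℝ, ∀ p, f p ≤ C
  row : ∀ x : unitInterval, ∫ v, f (x, v) = 1
  col : ∀ y : unitInterval, ∫ u, f (u, y) = 1

/-- The density `φ(f,μ)`. -/
def phiFn (f : Sq → ℝ) (μ : Measure Sq) (p : Sq) : ℝ :=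
  ∫ q, f (q.1, p.1) * f (q.2, p.2) ∂μ

/-- The measure `Φ(f,μ)`, with density `φ(f,μ)` w.r.t. 2-dimensional Lebesgue measure. -/
def PhiMeas (f : Sq → ℝ) (μ : Measure Sq) : Measure Sq :=
  volume.withDensity fun p => ENNReal.ofReal (phiFn f μ p)

/-- The shape of a measure `μ` on the unit square: the weak closure of the set of
(s-graphons corresponding to) the measures `Φ(f,μ)`, `f` continuous fairly distributed. -/
def shapeM (μ : Measure Sq) : Set SGraphon :=
  closure {ν : SGraphon | ∃ f : Sq → ℝ, FairlyDistributed f ∧ Continuous f ∧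
    ν.toMeasure = PhiMeas f μ}

/-- The shape `C(μ)` of an s-graphon. -/
def shape (μ : SGraphon) : Set SGraphon := shapeM μ.toMeasure

/-- A fractional partition into `k` parts: non-negative Borel functions on `[0,1]`
summing to the constant function 1, each integrating to `1/k`. -/
def IsFracPartition (k : ℕ) (f : Fin k → unitInterval → ℝ) : Prop :=
  (∀ i, Measurable (f i)) ∧ (∀ i x, 0 ≤ f i x) ∧ (∀ x, ∑ i, f i x = 1) ∧
    ∀ i, ∫ x, f i x = 1 / k

/-- The `k`-shape `C(μ,k)`: the closure in `ℝ^{k×k}` of the set of density matrices of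
fractional partitions into `k` parts. -/
def kShape (μ : Measure Sq) (k : ℕ) : Set (Matrix (Fin k) (Fin k) ℝ) :=
  closure {M | ∃ f : Fin k → unitInterval → ℝ, IsFracPartition k f ∧
    ∀ i j, M i j = ∫ p, f i p.1 * f j p.2 ∂μ}

/-- `M_k^*`: symmetric `k×k` matrices with non-negative entries summing to 1. -/
def Mstar (k : ℕ) : Set (Matrix (Fin k) (Fin k) ℝ) :=
  {M | M.IsSymm ∧ (∀ i j, 0 ≤ M i j) ∧ ∑ i, ∑ j, M i j = 1}

/-- The index `i` (0-based) with `u ∈ [i/k, (i+1)/k)` (and `i = k-1` for `u = 1`). -/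
def gridIdx (k : ℕ) (hk : 0 < k) (u : unitInterval) : Fin k :=
  ⟨min ⌊(u : ℝ) * k⌋₊ (k - 1), lt_of_le_of_lt (min_le_right _ _) (Nat.sub_lt hk one_pos)⟩

/-- The measure `μ_M` associated to a `k×k` matrix `M`: its density w.r.t. 2-dimensional
Lebesgue measure equals `k² M(i,j)` on the square `[i/k,(i+1)/k) × [j/k,(j+1)/k)` (0-based). -/
def muM {k : ℕ} (M : Matrix (Fin k) (Fin k) ℝ) : Measure Sq :=
  if hk : 0 < k then
    volume.withDensity fun p =>
      ENNReal.ofReal ((k : ℝ) ^ 2 * M (gridIdx k hk p.1) (gridIdx k hk p.2))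
  else 0

/-- `C̃(μ,k)`: the `k`-shape of `μ`, interpreted as a set of s-graphons. -/
def kShapeTilde (μ : Measure Sq) (k : ℕ) : Set SGraphon :=
  {ν : SGraphon | ∃ M ∈ kShape μ k, ν.toMeasure = muM M}

/-- The interval `I_i = [i/k, (i+1)/k)` (0-based), with `I_{k-1} = [(k-1)/k, 1]`,
as a subset of `[0,1]`. -/
def Ik (k : ℕ) (i : Fin k) : Set unitInterval :=
  if (i : ℕ) + 1 = k then Subtype.val ⁻¹' Set.Icc (((i : ℕ) : ℝ) / k) 1
  else Subtype.val ⁻¹' Set.Ico (((i : ℕ) : ℝ) / k) ((((i : ℕ) : ℝ) + 1) / k)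

/-!
An s-graphon `ν` lies in `C(μ)` if and only if `C(ν,k) ⊆ C(μ,k)` for every `k`; since `ν ∈ C(ν)`,
equality of shapes is then the same as equality of all `k`-shapes.

If `c` is a fractional partition, its density matrix for `Φ(f,μ)` is the density matrix for `μ` of
the transformed partition `x ↦ ∫ f(x,u) cᵢ(u) du`. For continuous `c` this matrix depends
continuously on the s-graphon, and continuous partitions already exhaust `C(ν,k)` up to closure, so
`ν ∈ C(μ)` forces `C(ν,k) ⊆ C(μ,k)`.

Conversely, for the kernel `f(x,u) = k ∑ᵢ cᵢ(x) hᵢ(u)` the measure `Φ(f,ν)` depends on `ν` only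
through the density matrix of `c`. If this matrix lies in `C(μ,k)`, approximating it by density
matrices of continuous partitions for `μ`, and `h` by continuous partitions, puts `Φ(f,ν)` into
`C(μ)`. Taking for `c = h` the partition of `[0,1]` into `k` equal intervals gives kernels
concentrating on the diagonal, for which `Φ(f,ν)` converges to `ν` as `k → ∞`.
-/

lemma exists_seq_continuous_tendsto_ae {X E : Type*} [TopologicalSpace X] [NormalSpace X]
    [MeasurableSpace X] [BorelSpace X] [NormedAddCommGroup E] [NormedSpace ℝ E] {σ : Measure X}
    [σ.WeaklyRegular] {g : X → E} (hg : Integrable g σ) :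
    ∃ b : ℕ → X → E, (∀ m, Continuous (b m)) ∧
      ∀ᵐ x ∂σ, Tendsto (fun m => b m x) atTop (𝓝 (g x)) := by
  obtain ⟨ε, -, hε_pos, hε⟩ := exists_seq_strictAnti_tendsto' (zero_lt_one (α := ENNReal))
  choose b hb hb_mem using fun m =>
    (memLp_one_iff_integrable.2 hg).exists_boundedContinuous_eLpNorm_sub_le
      ENNReal.one_ne_top (hε_pos m).1.ne'
  have h_norm : Tendsto (fun m => eLpNorm (⇑(b m) - g) 1 σ) atTop (𝓝 0) :=
    tendsto_of_tendsto_of_tendsto_of_le_of_le tendsto_const_nhds hε (fun _ => zero_le)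
      fun m => (eLpNorm_sub_comm _ _ _ _).trans_le (hb m)
  obtain ⟨ns, -, hns⟩ := (tendstoInMeasure_of_tendsto_eLpNorm one_ne_zero
    (fun m => (hb_mem m).aestronglyMeasurable) hg.aestronglyMeasurable h_norm).exists_seq_tendsto_ae
  exact ⟨fun m => b (ns m), fun m => (b (ns m)).continuous, hns⟩

section SimplexRetraction

variable {ι : Type*} [Fintype ι]

/-- A continuous retraction of `ι → ℝ` onto the standard simplex: take positive parts, share the
missing mass equally if they sum to less than `1`, and rescale if they sum to more. -/
def simplexRetraction (v : ι → ℝ) (i : ι) : ℝ :=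
  ((v i)⁺ + (1 - ∑ j, (v j)⁺)⁺ / Fintype.card ι) / max (∑ j, (v j)⁺) 1

lemma continuous_simplexRetraction : Continuous (simplexRetraction (ι := ι)) := by
  refine continuous_pi fun i => Continuous.div ?_ ?_ fun v => (lt_max_of_lt_right one_pos).ne'
  all_goals simp only [posPart_def]; fun_prop

lemma simplexRetraction_mem [Nonempty ι] (v : ι → ℝ) :
    simplexRetraction v ∈ stdSimplex ℝ ι := by
  refine ⟨fun i => by unfold simplexRetraction; positivity, ?_⟩
  have h_mass (S : ℝ) : S + (1 - S)⁺ = max S 1 := by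
    rw [posPart_def, ← max_add_add_left, add_sub_cancel, add_zero, max_comm]
  simp only [simplexRetraction]
  rw [← Finset.sum_div, Finset.sum_add_distrib, Finset.sum_const, Finset.card_univ, nsmul_eq_mul,
    mul_div_cancel₀ _ (Nat.cast_ne_zero.2 Fintype.card_ne_zero), h_mass, div_self]
  positivity

lemma simplexRetraction_eq_self {v : ι → ℝ} (hv : v ∈ stdSimplex ℝ ι) :
    simplexRetraction v = v := by
  ext i
  simp [simplexRetraction, posPart_eq_self.2 (hv.1 _), hv.2]

lemma exists_seq_continuous_mem_stdSimplex_tendsto_ae [Nonempty ι] {X : Type*}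
    [TopologicalSpace X] [NormalSpace X] [MeasurableSpace X] [BorelSpace X] {σ : Measure X}
    [σ.WeaklyRegular] {g : X → ι → ℝ} (hg : Integrable g σ) (hg_mem : ∀ x, g x ∈ stdSimplex ℝ ι) :
    ∃ d : ℕ → X → ι → ℝ, (∀ m, Continuous (d m)) ∧ (∀ m x, d m x ∈ stdSimplex ℝ ι) ∧
      ∀ᵐ x ∂σ, Tendsto (fun m => d m x) atTop (𝓝 (g x)) := by
  obtain ⟨b, hb, hb_lim⟩ := exists_seq_continuous_tendsto_ae hg
  refine ⟨fun m x => simplexRetraction (b m x), fun m => continuous_simplexRetraction.comp (hb m),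
    fun m x => simplexRetraction_mem (b m x), ?_⟩
  filter_upwards [hb_lim] with x hx
  have h_lim := (continuous_simplexRetraction.tendsto (g x)).comp hx
  rwa [simplexRetraction_eq_self (hg_mem x)] at h_lim

end SimplexRetraction

namespace IsFracPartition

variable {k : ℕ} {g : Fin k → unitInterval → ℝ}

lemma measurable (hg : IsFracPartition k g) (i : Fin k) : Measurable (g i) := hg.1 i

lemma nonneg (hg : IsFracPartition k g) (i : Fin k) (x : unitInterval) : 0 ≤ g i x := hg.2.1 i x

lemma sum_eq_one (hg : IsFracPartition k g) (x : unitInterval) : ∑ i, g i x = 1 := hg.2.2.1 x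

lemma integral_eq (hg : IsFracPartition k g) (i : Fin k) : ∫ x, g i x = 1 / k := hg.2.2.2 i

lemma mem_stdSimplex (hg : IsFracPartition k g) (x : unitInterval) :
    (fun i => g i x) ∈ stdSimplex ℝ (Fin k) :=
  ⟨fun i => hg.nonneg i x, hg.sum_eq_one x⟩

lemma norm_le_one (hg : IsFracPartition k g) (i : Fin k) (x : unitInterval) : ‖g i x‖ ≤ 1 := by
  rw [Real.norm_of_nonneg (hg.nonneg i x), ← hg.sum_eq_one x]
  exact Finset.single_le_sum (f := fun j => g j x) (fun j _ => hg.nonneg j x) (Finset.mem_univ i)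

lemma pos (hg : IsFracPartition k g) : 0 < k := by
  rcases Nat.eq_zero_or_pos k with rfl | hk
  · simpa using hg.sum_eq_one 0
  · exact hk

lemma integrable (hg : IsFracPartition k g) (i : Fin k) (σ : Measure unitInterval)
    [IsFiniteMeasure σ] : Integrable (g i) σ :=
  .of_bound (hg.measurable i).aestronglyMeasurable 1 (.of_forall (hg.norm_le_one i))

lemma integrable_mul_mul (hg : IsFracPartition k g) (i j : Fin k) {μ : Measure Sq} {F : Sq → ℝ}
    (hF : Integrable F μ) : Integrable (fun p => g i p.1 * g j p.2 * F p) μ := by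
  have hi := hg.measurable i
  have hj := hg.measurable j
  exact hF.bdd_mul (by fun_prop) (.of_forall fun p => by
    simpa using mul_le_one₀ (hg.norm_le_one i p.1) (norm_nonneg _) (hg.norm_le_one j p.2))

-- Replacing `c i` by `s * (c i - ∫ c i) + 1 / k` corrects the integrals without changing the sum.
lemma of_mem_stdSimplex {c : Fin k → unitInterval → ℝ} (hc : ∀ i, Measurable (c i))
    (hc_mem : ∀ x, (fun i => c i x) ∈ stdSimplex ℝ (Fin k)) {s : ℝ} (hs : 0 ≤ s)
    (hs_le : ∀ i, s * ∫ x, c i x ≤ 1 / k) :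
    IsFracPartition k fun i x => s * (c i x - ∫ y, c i y) + 1 / k := by
  have h_int (i : Fin k) : Integrable (c i) :=
    .of_mem_Icc 0 1 (hc i).aemeasurable
      (.of_forall fun x => mem_Icc_of_mem_stdSimplex (hc_mem x) i)
  have h_total : ∑ i, ∫ x, c i x = 1 := by
    rw [← integral_finsetSum _ fun i _ => h_int i,
      integral_congr_ae (.of_forall fun x => (hc_mem x).2), integral_const, probReal_univ, one_smul]
  have hk : (k : ℝ) ≠ 0 := by
    rintro h
    obtain rfl : k = 0 := by exact_mod_cast h
    simp at h_total
  refine ⟨fun i => (((hc i).sub_const _).const_mul s).add_const _, fun i x => ?_, fun x => ?_,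
    fun i => ?_⟩
  · linarith [mul_nonneg hs ((hc_mem x).1 i), hs_le i, mul_sub s (c i x) (∫ y, c i y)]
  · rw [Finset.sum_add_distrib, ← Finset.mul_sum, Finset.sum_sub_distrib, (hc_mem x).2, h_total]
    simp [hk]
  · have h_sub : Integrable fun x => c i x - ∫ y, c i y := (h_int i).sub (integrable_const _)
    rw [integral_add (h_sub.const_mul s) (integrable_const _), integral_const_mul,
      integral_sub (h_int i) (integrable_const _)]
    simp

lemma exists_seq_continuous (hg : IsFracPartition k g) (σ : Measure unitInterval)
    [IsFiniteMeasure σ] :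
    ∃ c : ℕ → Fin k → unitInterval → ℝ, (∀ m, IsFracPartition k (c m)) ∧
      (∀ m i, Continuous (c m i)) ∧
      ∀ᵐ x ∂σ, ∀ i, Tendsto (fun m => c m i x) atTop (𝓝 (g i x)) := by
  have : Nonempty (Fin k) := ⟨⟨0, hg.pos⟩⟩
  have hk : (0 : ℝ) < k := Nat.cast_pos.2 hg.pos
  have hg_int : Integrable (fun x i => g i x) (σ + volume) :=
    .of_eval fun i => hg.integrable i _
  obtain ⟨d, hd_cont, hd_mem, hd_lim⟩ :=
    exists_seq_continuous_mem_stdSimplex_tendsto_ae hg_int hg.mem_stdSimplex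
  simp only [tendsto_pi_nhds] at hd_lim
  have hd_cont_apply (m : ℕ) (i : Fin k) : Continuous fun x => d m x i :=
    (continuous_apply i).comp (hd_cont m)
  obtain ⟨hd_lim_σ, hd_lim_vol⟩ := ae_add_measure_iff.1 hd_lim
  set a : ℕ → Fin k → ℝ := fun m i => ∫ x, d m x i
  have ha_lim (i : Fin k) : Tendsto (fun m => a m i) atTop (𝓝 (1 / k)) := by
    rw [← hg.integral_eq i]
    refine tendsto_integral_of_dominated_convergence (fun _ => 1)
      (fun m => (hd_cont_apply m i).aestronglyMeasurable) (integrable_const 1)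
      (fun m => .of_forall fun x => ?_) (hd_lim_vol.mono fun x hx => hx i)
    rw [Real.norm_of_nonneg ((hd_mem m x).1 i)]
    exact (mem_Icc_of_mem_stdSimplex (hd_mem m x) i).2
  set s : ℕ → ℝ := fun m => (1 + ∑ i, |k * a m i - 1|)⁻¹ with hs
  have hs_lim : Tendsto s atTop (𝓝 1) := by
    have h (i : Fin k) : Tendsto (fun m => |k * a m i - 1|) atTop (𝓝 0) := by
      simpa [hk.ne'] using (((ha_lim i).const_mul (k : ℝ)).sub_const 1).abs
    simpa using ((tendsto_finsetSum Finset.univ fun i _ => h i).const_add 1).inv₀ (by simp)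
  have hs_le (m : ℕ) (i : Fin k) : s m * a m i ≤ 1 / k := by
    have := Finset.single_le_sum (f := fun j => |k * a m j - 1|) (fun j _ => abs_nonneg _)
      (Finset.mem_univ i)
    rw [hs, inv_mul_le_iff₀ (by positivity), ← div_eq_mul_one_div, le_div_iff₀ hk]
    linarith [le_abs_self (k * a m i - 1)]
  refine ⟨fun m i x => s m * (d m x i - a m i) + 1 / k,
    fun m => .of_mem_stdSimplex (fun i => (hd_cont_apply m i).measurable) (hd_mem m) (by positivity)
      (hs_le m),
    fun m i => (((hd_cont_apply m i).sub continuous_const).const_mul _).add_const _, ?_⟩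
  filter_upwards [hd_lim_σ] with x hx i
  simpa using (hs_lim.mul ((hx i).sub (ha_lim i))).add_const (1 / (k : ℝ))

lemma exists_seq_continuous_tendsto_integral (hg : IsFracPartition k g) (μ : Measure Sq)
    [IsFiniteMeasure μ] :
    ∃ c : ℕ → Fin k → unitInterval → ℝ, (∀ m, IsFracPartition k (c m)) ∧
      (∀ m i, Continuous (c m i)) ∧ ∀ F : Sq → ℝ, Integrable F μ → ∀ i j,
        Tendsto (fun m => ∫ p, c m i p.1 * c m j p.2 * F p ∂μ) atTop
          (𝓝 (∫ p, g i p.1 * g j p.2 * F p ∂μ)) := by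
  obtain ⟨c, hc, hc_cont, hc_lim⟩ := hg.exists_seq_continuous (μ.fst + μ.snd)
  obtain ⟨hc_fst, hc_snd⟩ := ae_add_measure_iff.1 hc_lim
  refine ⟨c, hc, hc_cont, fun F hF i j => ?_⟩
  refine tendsto_integral_of_dominated_convergence (fun p => ‖F p‖)
    (fun m => ((hc m).integrable_mul_mul i j hF).aestronglyMeasurable) hF.norm
    (fun m => .of_forall fun p => ?_) ?_
  · rw [norm_mul, norm_mul]
    exact mul_le_of_le_one_left (norm_nonneg _)
      (mul_le_one₀ ((hc m).norm_le_one i _) (norm_nonneg _) ((hc m).norm_le_one j _))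
  · filter_upwards [ae_of_ae_map measurable_fst.aemeasurable hc_fst,
      ae_of_ae_map measurable_snd.aemeasurable hc_snd] with p h_fst h_snd
    exact ((h_fst i).mul (h_snd j)).mul_const _

end IsFracPartition


/-- The density matrix of `g` with respect to `μ`, whose `(i, j)` entry is the integral of
`g i ⊗ g j`; the `k`-shape of `μ` is the closure of the density matrices of the fractional
partitions. -/
def densityMatrix {k : ℕ} (μ : Measure Sq) (g : Fin k → unitInterval → ℝ) :
    Matrix (Fin k) (Fin k) ℝ :=
  fun i j => ∫ p, g i p.1 * g j p.2 ∂μ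

lemma IsFracPartition.densityMatrix_mem_kShape {k : ℕ} {g : Fin k → unitInterval → ℝ}
    (hg : IsFracPartition k g) (μ : Measure Sq) : densityMatrix μ g ∈ kShape μ k :=
  subset_closure ⟨g, hg, fun _ _ => rfl⟩

lemma kShape_eq_closure_continuous (μ : Measure Sq) [IsFiniteMeasure μ] (k : ℕ) :
    kShape μ k =
      closure {M | ∃ c, IsFracPartition k c ∧ (∀ i, Continuous (c i)) ∧ densityMatrix μ c = M} := by
  refine Set.Subset.antisymm (closure_minimal ?_ isClosed_closure)
    (closure_minimal ?_ isClosed_closure)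
  · rintro M ⟨g, hg, hM⟩
    obtain rfl : M = densityMatrix μ g := Matrix.ext hM
    obtain ⟨c, hc, hc_cont, hc_lim⟩ := hg.exists_seq_continuous_tendsto_integral μ
    have h_lim : Tendsto (fun m => densityMatrix μ (c m)) atTop (𝓝 (densityMatrix μ g)) :=
      tendsto_pi_nhds.2 fun i => tendsto_pi_nhds.2 fun j => by
        simpa only [densityMatrix, mul_one] using hc_lim (fun _ => 1) (integrable_const 1) i j
    exact mem_closure_of_tendsto h_lim (.of_forall fun m => ⟨c m, hc m, hc_cont m, rfl⟩)
  · rintro _ ⟨c, hc, -, rfl⟩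
    exact hc.densityMatrix_mem_kShape μ

lemma phiFn_swap {μ : Measure Sq} (hμ : IsSymmSq μ) (f : Sq → ℝ) (p : Sq) :
    phiFn f μ p.swap = phiFn f μ p := by
  have h_swap : MeasurePreserving (Prod.swap : Sq → Sq) μ μ := ⟨measurable_swap, hμ⟩
  simpa only [phiFn, Prod.fst_swap, Prod.snd_swap, mul_comm] using
    h_swap.integral_comp MeasurableEquiv.prodComm.measurableEmbedding
      fun q => f (q.1, p.1) * f (q.2, p.2)

namespace FairlyDistributed

variable {f : Sq → ℝ}

lemma integrable_mul (hf : FairlyDistributed f) {Z : Type*} [MeasurableSpace Z] {σ : Measure Z}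
    {a : Z → Sq} (ha : Measurable a) {G : Z → ℝ} (hG : Integrable G σ) :
    Integrable (fun z => f (a z) * G z) σ := by
  obtain ⟨C, hC⟩ := hf.bounded
  refine hG.bdd_mul (c := C) (hf.measurable.comp ha).aestronglyMeasurable (.of_forall fun z => ?_)
  rw [Real.norm_of_nonneg (hf.nonneg _)]
  exact hC _

lemma integrable_mul_mul (hf : FairlyDistributed f) {μ : Measure Sq} [IsFiniteMeasure μ]
    {F : Sq → ℝ} (hF : Integrable F) :
    Integrable (fun z : Sq × Sq => f (z.1.1, z.2.1) * f (z.1.2, z.2.2) * F z.2)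
      (μ.prod volume) := by
  simpa only [mul_assoc] using hf.integrable_mul (by fun_prop)
    (hf.integrable_mul (a := fun z : Sq × Sq => (z.1.2, z.2.2)) (by fun_prop) (hF.comp_snd μ))

lemma integral_mul_eq_one (hf : FairlyDistributed f) (q : Sq) :
    ∫ p : Sq, f (q.1, p.1) * f (q.2, p.2) = 1 := by
  rw [Measure.volume_eq_prod, integral_prod_mul (fun u => f (q.1, u)) (fun v => f (q.2, v)),
    hf.row, hf.row, one_mul]

lemma phiFn_nonneg (hf : FairlyDistributed f) (μ : Measure Sq) (p : Sq) : 0 ≤ phiFn f μ p :=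
  integral_nonneg fun _ => mul_nonneg (hf.nonneg _) (hf.nonneg _)

lemma measurable_phiFn (hf : FairlyDistributed f) (μ : Measure Sq) [SFinite μ] :
    Measurable (phiFn f μ) := by
  have h_meas := hf.measurable
  have h_prod : Measurable fun z : Sq × Sq => f (z.2.1, z.1.1) * f (z.2.2, z.1.2) := by fun_prop
  exact h_prod.stronglyMeasurable.integral_prod_right'.measurable

lemma integral_PhiMeas (hf : FairlyDistributed f) (μ : Measure Sq) [SFinite μ] (F : Sq → ℝ) :
    ∫ p, F p ∂PhiMeas f μ = ∫ p, phiFn f μ p * F p := by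
  rw [PhiMeas, integral_withDensity_eq_integral_toReal_smul
    (hf.measurable_phiFn μ).ennreal_ofReal (.of_forall fun _ => ENNReal.ofReal_lt_top)]
  simp only [ENNReal.toReal_ofReal (hf.phiFn_nonneg μ _), smul_eq_mul]

lemma integral_PhiMeas_eq_integral_integral (hf : FairlyDistributed f) (μ : Measure Sq)
    [IsFiniteMeasure μ] {F : Sq → ℝ} (hF : Integrable F) :
    ∫ p, F p ∂PhiMeas f μ = ∫ q, (∫ p : Sq, f (q.1, p.1) * f (q.2, p.2) * F p) ∂μ := by
  rw [hf.integral_PhiMeas μ F]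
  simp only [phiFn, ← integral_mul_const]
  exact (integral_integral_swap (hf.integrable_mul_mul hF)).symm

lemma isProbabilityMeasure_PhiMeas (hf : FairlyDistributed f) (μ : Measure Sq)
    [IsProbabilityMeasure μ] : IsProbabilityMeasure (PhiMeas f μ) := by
  have h_mass := hf.integral_PhiMeas_eq_integral_integral μ (integrable_const 1)
  simp only [mul_one, hf.integral_mul_eq_one, integral_const, smul_eq_mul, probReal_univ] at h_mass
  exact ⟨ENNReal.toReal_eq_one_iff _ |>.1 h_mass⟩

lemma isSymmSq_PhiMeas (hf : FairlyDistributed f) {μ : Measure Sq} [SFinite μ] (hμ : IsSymmSq μ) :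
    IsSymmSq (PhiMeas f μ) := by
  have h_swap : MeasurePreserving (Prod.swap : Sq → Sq) volume volume :=
    Measure.measurePreserving_swap
  ext s hs
  rw [Measure.map_apply measurable_swap hs, PhiMeas, withDensity_apply _ hs,
    withDensity_apply _ (measurable_swap hs),
    ← h_swap.setLIntegral_comp_preimage hs (hf.measurable_phiFn μ).ennreal_ofReal]
  simp only [phiFn_swap hμ]

end FairlyDistributed

namespace SGraphon

instance (μ : SGraphon) : IsProbabilityMeasure μ.toMeasure :=
  inferInstanceAs (IsProbabilityMeasure (μ.1 : Measure Sq))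

lemma tendsto_of_forall_integral {W : ℕ → SGraphon} {ν : SGraphon}
    (h : ∀ F : Sq → ℝ, Continuous F →
      Tendsto (fun n => ∫ p, F p ∂(W n).toMeasure) atTop (𝓝 (∫ p, F p ∂ν.toMeasure))) :
    Tendsto W atTop (𝓝 ν) :=
  tendsto_subtype_rng.2 <| ProbabilityMeasure.tendsto_iff_forall_integral_tendsto.2
    fun F => h F F.continuous

lemma continuous_integral {F : Sq → ℝ} (hF : Continuous F) :
    Continuous fun ν : SGraphon => ∫ p, F p ∂ν.toMeasure :=
  ProbabilityMeasure.continuous_iff_forall_continuous_integral.1 continuous_subtype_val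
    (BoundedContinuousFunction.mkOfCompact ⟨F, hF⟩)

lemma continuous_densityMatrix {k : ℕ} {c : Fin k → unitInterval → ℝ}
    (hc : ∀ i, Continuous (c i)) : Continuous fun ν : SGraphon => densityMatrix ν.toMeasure c :=
  continuous_matrix fun i j =>
    continuous_integral (((hc i).comp continuous_fst).mul ((hc j).comp continuous_snd))

/-- The measure `Φ(f,μ)` as an s-graphon, for a fairly distributed `f` that need not be
continuous. -/
def phi (μ : SGraphon) {f : Sq → ℝ} (hf : FairlyDistributed f) : SGraphon :=
  ⟨⟨PhiMeas f μ.toMeasure, hf.isProbabilityMeasure_PhiMeas _⟩, hf.isSymmSq_PhiMeas μ.2⟩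

@[simp]
lemma toMeasure_phi (μ : SGraphon) {f : Sq → ℝ} (hf : FairlyDistributed f) :
    (μ.phi hf).toMeasure = PhiMeas f μ.toMeasure := rfl

lemma phi_mem_shape (μ : SGraphon) {f : Sq → ℝ} (hf : FairlyDistributed f)
    (hf_cont : Continuous f) : μ.phi hf ∈ shape μ :=
  subset_closure ⟨f, hf, hf_cont, rfl⟩

end SGraphon

/-- The image `x ↦ ∫ f(x,u) a(u) du` of `a` under the integral operator with kernel `f`; through
this operator integration against `Φ(f,μ)` becomes integration against `μ`. -/
def integralTransform (f : Sq → ℝ) (a : unitInterval → ℝ) (x : unitInterval) : ℝ :=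
  ∫ u, f (x, u) * a u

namespace FairlyDistributed

variable {f : Sq → ℝ} {k : ℕ} {g : Fin k → unitInterval → ℝ}

lemma isFracPartition_integralTransform (hf : FairlyDistributed f) (hg : IsFracPartition k g) :
    IsFracPartition k fun i => integralTransform f (g i) := by
  have hf_meas := hf.measurable
  refine ⟨fun i => ?_, fun i x => ?_, fun x => ?_, fun i => ?_⟩
  · have hg_meas := hg.measurable i
    have h_prod : Measurable fun z : Sq => f z * g i z.2 := by fun_prop
    exact h_prod.stronglyMeasurable.integral_prod_right'.measurable
  · exact integral_nonneg fun u => mul_nonneg (hf.nonneg _) (hg.nonneg i u)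
  · simp only [integralTransform]
    rw [← integral_finsetSum _ fun i _ => hf.integrable_mul (by fun_prop) (hg.integrable i _)]
    simp only [← Finset.mul_sum, hg.sum_eq_one, mul_one, hf.row]
  · simp only [integralTransform]
    rw [integral_integral_swap
      (hf.integrable_mul (a := id) measurable_id ((hg.integrable i volume).comp_snd volume))]
    simp only [integral_mul_const, hf.col, one_mul, hg.integral_eq]

lemma densityMatrix_PhiMeas (hf : FairlyDistributed f) (μ : Measure Sq) [IsFiniteMeasure μ]
    (hg : ∀ i, Integrable (g i)) :
    densityMatrix (PhiMeas f μ) g = densityMatrix μ fun i => integralTransform f (g i) := by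
  ext i j
  rw [densityMatrix, hf.integral_PhiMeas_eq_integral_integral μ ((hg i).mul_prod (hg j))]
  refine integral_congr_ae (.of_forall fun q => ?_)
  simp only [mul_mul_mul_comm _ _ (g i _)]
  exact integral_prod_mul (fun u => f (q.1, u) * g i u) fun v => f (q.2, v) * g j v

end FairlyDistributed

theorem kShape_subset_of_mem_shape {μ ν : SGraphon} (h : ν ∈ shape μ) (k : ℕ) :
    kShape ν.toMeasure k ⊆ kShape μ.toMeasure k := by
  rw [kShape_eq_closure_continuous ν.toMeasure]
  refine closure_minimal ?_ isClosed_closure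
  rintro _ ⟨c, hc, hc_cont, rfl⟩
  have h_closed : IsClosed {ν' : SGraphon | densityMatrix ν'.toMeasure c ∈ kShape μ.toMeasure k} :=
    isClosed_closure.preimage (SGraphon.continuous_densityMatrix hc_cont)
  refine closure_minimal ?_ h_closed h
  rintro ν' ⟨f, hf, -, hν'⟩
  rw [Set.mem_ofPred_eq, hν', hf.densityMatrix_PhiMeas _ fun i => hc.integrable i _]
  exact (hf.isFracPartition_integralTransform hc).densityMatrix_mem_kShape _

/-- The kernel `k ∑ᵢ cᵢ(x) hᵢ(u)` built from two fractional partitions. Through it, `Φ` depends on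
`μ` only via the density matrix of `c`. -/
def partitionKernel {k : ℕ} (c h : Fin k → unitInterval → ℝ) (p : Sq) : ℝ :=
  k * ∑ i, c i p.1 * h i p.2

section PartitionKernel

variable {k : ℕ} {c h : Fin k → unitInterval → ℝ}

lemma continuous_partitionKernel (hc : ∀ i, Continuous (c i)) (hh : ∀ i, Continuous (h i)) :
    Continuous (partitionKernel c h) := by
  unfold partitionKernel
  fun_prop

lemma partitionKernel_swap (c h : Fin k → unitInterval → ℝ) (p : Sq) :
    partitionKernel c h p.swap = partitionKernel h c p := by
  simp only [partitionKernel, Prod.fst_swap, Prod.snd_swap, mul_comm]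

lemma IsFracPartition.integral_partitionKernel (hc : IsFracPartition k c)
    (hh : IsFracPartition k h) (x : unitInterval) : ∫ v, partitionKernel c h (x, v) = 1 := by
  have hk : (k : ℝ) ≠ 0 := Nat.cast_ne_zero.2 hc.pos.ne'
  simp only [partitionKernel]
  rw [integral_const_mul, integral_finsetSum _ fun i _ => (hh.integrable i _).const_mul _]
  simp only [integral_const_mul, hh.integral_eq, ← Finset.sum_mul, hc.sum_eq_one, one_mul]
  exact mul_one_div_cancel hk

lemma IsFracPartition.fairlyDistributed_partitionKernel (hc : IsFracPartition k c)
    (hh : IsFracPartition k h) : FairlyDistributed (partitionKernel c h) where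
  measurable := by
    have hc_meas := hc.measurable
    have hh_meas := hh.measurable
    unfold partitionKernel
    fun_prop
  nonneg p := mul_nonneg k.cast_nonneg
    (Finset.sum_nonneg fun i _ => mul_nonneg (hc.nonneg i _) (hh.nonneg i _))
  bounded := by
    refine ⟨k, fun p => mul_le_of_le_one_right k.cast_nonneg ?_⟩
    rw [← hc.sum_eq_one p.1]
    exact Finset.sum_le_sum fun i _ => mul_le_of_le_one_right (hc.nonneg i _)
      ((le_abs_self _).trans (hh.norm_le_one i _))
  row := hc.integral_partitionKernel hh
  col y := by
    simpa only [← partitionKernel_swap c h, Prod.swap_prod_mk] using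
      hh.integral_partitionKernel hc y

lemma IsFracPartition.phiFn_partitionKernel (hc : IsFracPartition k c) (μ : Measure Sq)
    [IsFiniteMeasure μ] (p : Sq) :
    phiFn (partitionKernel c h) μ p =
      k ^ 2 * ∑ i, ∑ j, densityMatrix μ c i j * (h i p.1 * h j p.2) := by
  have h_expand (q : Sq) : partitionKernel c h (q.1, p.1) * partitionKernel c h (q.2, p.2) =
      k ^ 2 * ∑ i, ∑ j, c i q.1 * c j q.2 * (h i p.1 * h j p.2) := by
    simp only [partitionKernel, mul_mul_mul_comm (k : ℝ), Finset.sum_mul_sum, ← sq,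
      mul_mul_mul_comm (c _ _) (h _ _)]
  have h_int (i j : Fin k) :
      Integrable (fun q : Sq => c i q.1 * c j q.2 * (h i p.1 * h j p.2)) μ :=
    hc.integrable_mul_mul i j (integrable_const _)
  simp only [phiFn, h_expand, densityMatrix]
  rw [integral_const_mul,
    integral_finsetSum _ fun i _ => integrable_finsetSum _ fun j _ => h_int i j]
  simp only [integral_finsetSum _ fun j _ => h_int _ j, integral_mul_const]

lemma IsFracPartition.integral_PhiMeas_partitionKernel (hc : IsFracPartition k c)
    (hh : IsFracPartition k h) (μ : Measure Sq) [IsFiniteMeasure μ] {F : Sq → ℝ}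
    (hF : Integrable F) :
    ∫ p, F p ∂PhiMeas (partitionKernel c h) μ =
      k ^ 2 * ∑ i, ∑ j, densityMatrix μ c i j * ∫ p : Sq, h i p.1 * h j p.2 * F p := by
  have h_int (i j : Fin k) :
      Integrable fun p : Sq => densityMatrix μ c i j * (h i p.1 * (h j p.2 * F p)) := by
    simpa only [mul_assoc] using (hh.integrable_mul_mul i j hF).const_mul _
  rw [(hc.fairlyDistributed_partitionKernel hh).integral_PhiMeas μ F]
  simp only [hc.phiFn_partitionKernel, mul_assoc, Finset.sum_mul]
  rw [integral_const_mul,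
    integral_finsetSum _ fun i _ => integrable_finsetSum _ fun j _ => h_int i j]
  simp only [integral_finsetSum _ fun j _ => h_int _ j, integral_const_mul]

theorem phi_partitionKernel_mem_shape {μ ν : SGraphon} (hc : IsFracPartition k c)
    (hh : IsFracPartition k h) (h_mem : densityMatrix ν.toMeasure c ∈ kShape μ.toMeasure k) :
    ν.phi (hc.fairlyDistributed_partitionKernel hh) ∈ shape μ := by
  have : FirstCountableTopology (Matrix (Fin k) (Fin k) ℝ) :=
    inferInstanceAs (FirstCountableTopology (Fin k → Fin k → ℝ))
  rw [kShape_eq_closure_continuous, mem_closure_iff_seq_limit] at h_mem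
  obtain ⟨D, hD, hD_lim⟩ := h_mem
  choose c' hc' hc'_cont hDc' using hD
  obtain rfl : (fun m => densityMatrix μ.toMeasure (c' m)) = D := funext hDc'
  obtain ⟨h', hh', hh'_cont, hh'_lim⟩ := hh.exists_seq_continuous_tendsto_integral volume
  have h_approx (m : ℕ) :
      μ.phi ((hc' m).fairlyDistributed_partitionKernel (hh' m)) ∈ shape μ :=
    μ.phi_mem_shape _ (continuous_partitionKernel (hc'_cont m) (hh'_cont m))
  refine isClosed_closure.mem_of_tendsto (SGraphon.tendsto_of_forall_integral fun F hF => ?_)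
    (.of_forall h_approx)
  have hF_int : Integrable F := hF.integrable_of_hasCompactSupport (.of_compactSpace F)
  simp only [SGraphon.toMeasure_phi, (hc' _).integral_PhiMeas_partitionKernel (hh' _) _ hF_int,
    hc.integral_PhiMeas_partitionKernel hh _ hF_int]
  exact (tendsto_finsetSum _ fun i _ => tendsto_finsetSum _ fun j _ =>
    (tendsto_pi_nhds.1 (tendsto_pi_nhds.1 hD_lim i) j).mul (hh'_lim F hF_int i j)).const_mul _

end PartitionKernel

section ApproximateIdentity

variable {f : Sq → ℝ}

lemma FairlyDistributed.norm_integral_mul_sub_le (hf : FairlyDistributed f) {δ ε : ℝ}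
    (h_supp : ∀ p, f p ≠ 0 → dist p.1 p.2 ≤ δ) {F : Sq → ℝ} (hF : Integrable F) {q : Sq}
    (hq : ∀ p, dist q p ≤ δ → ‖F p - F q‖ ≤ ε) :
    ‖(∫ p : Sq, f (q.1, p.1) * f (q.2, p.2) * F p) - F q‖ ≤ ε := by
  set K : Sq → ℝ := fun p => f (q.1, p.1) * f (q.2, p.2) with hK
  have hK_nonneg (p : Sq) : 0 ≤ K p := mul_nonneg (hf.nonneg _) (hf.nonneg _)
  have hK_one : ∫ p, K p = 1 := hf.integral_mul_eq_one q
  have hK_int {G : Sq → ℝ} (hG : Integrable G) : Integrable fun p => K p * G p := by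
    simpa only [hK, mul_assoc] using hf.integrable_mul (by fun_prop)
      (hf.integrable_mul (a := fun p : Sq => (q.2, p.2)) (by fun_prop) hG)
  have h_bound (p : Sq) : ‖K p * (F p - F q)‖ ≤ K p * ε := by
    rw [norm_mul, Real.norm_of_nonneg (hK_nonneg p)]
    by_cases hp : K p = 0
    · simp [hp]
    · have h_dist : dist q p ≤ δ :=
        max_le (h_supp _ (left_ne_zero_of_mul hp)) (h_supp _ (right_ne_zero_of_mul hp))
      exact mul_le_mul_of_nonneg_left (hq p h_dist) (hK_nonneg p)
  calc ‖(∫ p, K p * F p) - F q‖ = ‖∫ p, K p * (F p - F q)‖ := by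
        simp only [mul_sub]
        rw [integral_sub (hK_int hF) (hK_int (integrable_const _)), integral_mul_const, hK_one,
          one_mul]
    _ ≤ ∫ p, K p * ε := norm_integral_le_of_norm_le (hK_int (integrable_const ε))
        (.of_forall h_bound)
    _ = ε := by rw [integral_mul_const, hK_one, one_mul]

lemma FairlyDistributed.norm_integral_PhiMeas_sub_le (hf : FairlyDistributed f) {δ ε : ℝ}
    (h_supp : ∀ p, f p ≠ 0 → dist p.1 p.2 ≤ δ) {F : Sq → ℝ} (hF : Integrable F)
    (hFδ : ∀ q p, dist q p ≤ δ → ‖F p - F q‖ ≤ ε) (μ : Measure Sq) [IsProbabilityMeasure μ]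
    (hFμ : Integrable F μ) : ‖∫ p, F p ∂PhiMeas f μ - ∫ p, F p ∂μ‖ ≤ ε := by
  rw [hf.integral_PhiMeas_eq_integral_integral μ hF,
    ← integral_sub (hf.integrable_mul_mul hF).integral_prod_left hFμ]
  simpa using norm_integral_le_of_norm_le_const (μ := μ)
    (.of_forall fun q => hf.norm_integral_mul_sub_le h_supp hF (hFδ q))

lemma SGraphon.tendsto_phi {f : ℕ → Sq → ℝ} (hf : ∀ n, FairlyDistributed (f n)) {r : ℕ → ℝ}
    (hr : Tendsto r atTop (𝓝 0)) (h_supp : ∀ n p, f n p ≠ 0 → dist p.1 p.2 ≤ r n) (ν : SGraphon) :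
    Tendsto (fun n => ν.phi (hf n)) atTop (𝓝 ν) := by
  refine tendsto_of_forall_integral fun F hF => Metric.tendsto_atTop'.2 fun ε hε => ?_
  have hF_int (σ : Measure Sq) [IsFiniteMeasure σ] : Integrable F σ :=
    hF.integrable_of_hasCompactSupport (.of_compactSpace F)
  obtain ⟨δ, hδ, hFδ⟩ := Metric.uniformContinuous_iff.1
    (CompactSpace.uniformContinuous_of_continuous hF) (ε / 2) (half_pos hε)
  obtain ⟨N, hN⟩ := eventually_atTop.1 (hr.eventually_lt_const hδ)
  refine ⟨N, fun n hn => (?_ : _ ≤ ε / 2).trans_lt (half_lt_self hε)⟩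
  refine (hf n).norm_integral_PhiMeas_sub_le (h_supp n) (hF_int _) (fun q p hqp => ?_) _ (hF_int _)
  rw [← dist_eq_norm, dist_comm]
  exact (hFδ (hqp.trans_lt (hN n hn.le))).le

end ApproximateIdentity

section GridPartition

variable {k : ℕ} (hk : 0 < k)

lemma gridIdx_le_mul (x : unitInterval) : (gridIdx k hk x : ℝ) ≤ x * k :=
  (Nat.cast_le.2 (min_le_left _ _)).trans (Nat.floor_le (mul_nonneg x.2.1 k.cast_nonneg))

lemma mul_le_gridIdx_add_one (x : unitInterval) : (x : ℝ) * k ≤ gridIdx k hk x + 1 := by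
  simp only [gridIdx, Nat.cast_min, ← min_add_add_right, le_min_iff]
  refine ⟨(Nat.lt_floor_add_one _).le, ?_⟩
  rw [Nat.cast_pred hk, sub_add_cancel]
  exact mul_le_of_le_one_left k.cast_nonneg x.2.2

lemma dist_le_of_gridIdx_eq {x y : unitInterval} (h : gridIdx k hk x = gridIdx k hk y) :
    dist x y ≤ 1 / k := by
  have hx_lower := gridIdx_le_mul hk x
  have hx_upper := mul_le_gridIdx_add_one hk x
  have hk' : (0 : ℝ) < k := Nat.cast_pos.2 hk
  rw [h] at hx_lower hx_upper
  rw [Subtype.dist_eq, Real.dist_eq, le_div_iff₀ hk', ← abs_of_pos hk', ← abs_mul, abs_le, sub_mul]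
  constructor <;> linarith [gridIdx_le_mul hk y, mul_le_gridIdx_add_one hk y]

lemma measurable_gridIdx : Measurable (gridIdx k hk) := by
  have h_floor : Measurable fun x : unitInterval => ⌊(x : ℝ) * k⌋₊ := by fun_prop
  have h_trunc : Measurable fun m : ℕ => (⟨min m (k - 1), by omega⟩ : Fin k) := measurable_from_top
  exact h_trunc.comp h_floor

lemma volume_real_gridIdx_preimage_le (i : Fin k) :
    volume.real (gridIdx k hk ⁻¹' {i}) ≤ 1 / k := by
  have hk' : (0 : ℝ) < k := Nat.cast_pos.2 hk
  have hi : (i : ℝ) + 1 ≤ k := by exact_mod_cast i.2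
  set a : unitInterval := ⟨i / k, unitInterval.div_mem (by positivity) hk'.le (by linarith)⟩ with ha
  set b : unitInterval := ⟨(i + 1) / k, unitInterval.div_mem (by positivity) hk'.le hi⟩ with hb
  have h_sub : gridIdx k hk ⁻¹' {i} ⊆ Set.Icc a b := by
    rintro x rfl
    exact ⟨(div_le_iff₀ hk').2 (gridIdx_le_mul hk x),
      (le_div_iff₀ hk').2 (mul_le_gridIdx_add_one hk x)⟩
  refine (measureReal_mono h_sub).trans_eq ?_
  rw [measureReal_def, unitInterval.volume_Icc, ha, hb, ← sub_div, add_sub_cancel_left,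
    ENNReal.toReal_ofReal (by positivity)]

/-- The partition of `[0,1]` into `k` consecutive intervals of equal length, given by the indicator
functions of the fibres of `gridIdx`. -/
def gridPartition (k : ℕ) (hk : 0 < k) (i : Fin k) : unitInterval → ℝ :=
  (gridIdx k hk ⁻¹' {i}).indicator 1

lemma isFracPartition_gridPartition : IsFracPartition k (gridPartition k hk) := by
  have h_cell (i : Fin k) : MeasurableSet (gridIdx k hk ⁻¹' {i}) :=
    measurable_gridIdx hk (measurableSet_singleton i)
  have h_sum (x : unitInterval) : ∑ i, gridPartition k hk i x = 1 := by
    classical simp [gridPartition, Set.indicator_apply]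
  have h_le (i : Fin k) : ∫ x, gridPartition k hk i x ≤ 1 / k := by
    rw [gridPartition, integral_indicator_one (h_cell i)]
    exact volume_real_gridIdx_preimage_le hk i
  -- The `k` integrals are at most `1 / k` and add up to `1`, so all of them equal `1 / k`.
  have h_total : ∑ i, ∫ x, gridPartition k hk i x = ∑ _i : Fin k, 1 / (k : ℝ) := by
    rw [← integral_finsetSum _ fun i _ => (integrable_const 1).indicator (h_cell i)]
    simp [h_sum, hk.ne']
  exact ⟨fun i => measurable_one.indicator (h_cell i),
    fun i x => Set.indicator_nonneg (fun _ _ => zero_le_one) x, h_sum, fun i =>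
    (Finset.sum_eq_sum_iff_of_le fun i _ => h_le i).1 h_total i (Finset.mem_univ i)⟩

lemma dist_le_of_partitionKernel_gridPartition_ne_zero {p : Sq}
    (hp : partitionKernel (gridPartition k hk) (gridPartition k hk) p ≠ 0) :
    dist p.1 p.2 ≤ 1 / k := by
  obtain ⟨i, -, hi⟩ := Finset.exists_ne_zero_of_sum_ne_zero (right_ne_zero_of_mul hp)
  have h₁ : p.1 ∈ gridIdx k hk ⁻¹' {i} := Set.mem_of_indicator_ne_zero (left_ne_zero_of_mul hi)
  have h₂ : p.2 ∈ gridIdx k hk ⁻¹' {i} := Set.mem_of_indicator_ne_zero (right_ne_zero_of_mul hi)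
  exact dist_le_of_gridIdx_eq hk (h₁.trans h₂.symm)

end GridPartition

theorem mem_shape_of_kShape_subset {μ ν : SGraphon}
    (h : ∀ k, 0 < k → kShape ν.toMeasure k ⊆ kShape μ.toMeasure k) : ν ∈ shape μ := by
  have h_grid (n : ℕ) := isFracPartition_gridPartition n.succ_pos
  refine isClosed_closure.mem_of_tendsto
    (ν.tendsto_phi (fun n => (h_grid n).fairlyDistributed_partitionKernel (h_grid n))
      tendsto_one_div_add_atTop_nhds_zero_nat fun n p hp => ?_)
    (.of_forall fun n => phi_partitionKernel_mem_shape (h_grid n) (h_grid n)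
      (h _ n.succ_pos ((h_grid n).densityMatrix_mem_kShape _)))
  simpa using dist_le_of_partitionKernel_gridPartition_ne_zero n.succ_pos hp

theorem mem_shape_iff {μ ν : SGraphon} :
    ν ∈ shape μ ↔ ∀ k, 0 < k → kShape ν.toMeasure k ⊆ kShape μ.toMeasure k :=
  ⟨fun h k _ => kShape_subset_of_mem_shape h k, mem_shape_of_kShape_subset⟩

/-- Corollary `cor:shapes`. Two s-graphons have the same `k`-shapes for every
`k ∈ ℕ` if and only if their shapes coincide. -/
theorem stmt3 (ν₁ ν₂ : SGraphon) :
    (∀ k : ℕ, 0 < k → kShape ν₁.toMeasure k = kShape ν₂.toMeasure k) ↔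
      shape ν₁ = shape ν₂ := by
  constructor
  · intro h
    ext ν
    rw [mem_shape_iff, mem_shape_iff]
    exact forall₂_congr fun k hk => by rw [h k hk]
  · intro h k hk
    have h_self (ν : SGraphon) : ν ∈ shape ν := mem_shape_iff.2 fun _ _ => subset_rfl
    have h_mem₁ : ν₁ ∈ shape ν₂ := h ▸ h_self ν₁
    have h_mem₂ : ν₂ ∈ shape ν₁ := h ▸ h_self ν₂
    exact Set.Subset.antisymm (mem_shape_iff.1 h_mem₁ k hk) (mem_shape_iff.1 h_mem₂ k hk)

end
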